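/- Let (u, v) be an H-continuous pair on Ω. Then the set W = { x ∈ Ω : u(x) < v(x) } is meagre in Ω (with the subspace topology), and the function u (which coincides with v outside W) is continuous on Ω \ W. -/

import Mathlib

open Set

/-- Points of `ℝⁿ`. -/
abbrev Pt (n : ℕ) := EuclideanSpace ℝ (Fin n)

/-- Lower Baire operator `I(D,Ω,f)(x) = sup_{δ>0} inf { f y : y ∈ B_δ(x) ∩ D }`,
where `B_δ(x) = { y ∈ Ω : ‖y - x‖ < δ }`. -/
noncomputable def Ilow {n : ℕ} (D Om : Set (Pt n)) (f : Pt n → ℝ) (x : Pt n) : ℝ :=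
  sSup {a : ℝ | ∃ δ : ℝ, 0 < δ ∧
    a = sInf (f '' {y | y ∈ Om ∧ ‖y - x‖ < δ ∧ y ∈ D})}

/-- Upper Baire operator `S(D,Ω,f)(x) = inf_{δ>0} sup { f y : y ∈ B_δ(x) ∩ D }`. -/
noncomputable def Shigh {n : ℕ} (D Om : Set (Pt n)) (f : Pt n → ℝ) (x : Pt n) : ℝ :=
  sInf {a : ℝ | ∃ δ : ℝ, 0 < δ ∧
    a = sSup (f '' {y | y ∈ Om ∧ ‖y - x‖ < δ ∧ y ∈ D})}

/-- `f`, defined on `D ⊆ Ω`, is locally bounded relative to `Ω`. -/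
def LocBddOn {n : ℕ} (Om D : Set (Pt n)) (f : Pt n → ℝ) : Prop :=
  ∀ x ∈ Om, ∃ δ : ℝ, 0 < δ ∧ ∃ M : ℝ,
    ∀ y, y ∈ Om → ‖y - x‖ < δ → y ∈ D → |f y| < M

/-- `(u, v)` encodes an interval-valued function `x ↦ [u x, v x]` on `Om`. -/
def IntervalPair {n : ℕ} (Om : Set (Pt n)) (u v : Pt n → ℝ) : Prop :=
  LocBddOn Om Om u ∧ LocBddOn Om Om v ∧ ∀ x ∈ Om, u x ≤ v x

/-- The pair `(u, v)` is S-continuous on `Om`: `I(u) = u` and `S(v) = v`. -/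
def SCont {n : ℕ} (Om : Set (Pt n)) (u v : Pt n → ℝ) : Prop :=
  ∀ x ∈ Om, Ilow Om Om u x = u x ∧ Shigh Om Om v x = v x

/-- The pair `(u, v)` is Hausdorff continuous on `Om`. -/
def HCont {n : ℕ} (Om : Set (Pt n)) (u v : Pt n → ℝ) : Prop :=
  ∀ p q : Pt n → ℝ, LocBddOn Om Om p → LocBddOn Om Om q →
    (∀ x ∈ Om, u x ≤ p x ∧ p x ≤ q x ∧ q x ≤ v x) →
    ∀ x ∈ Om, Ilow Om Om p x = u x ∧ Shigh Om Om q x = v x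

/-- `(u, v)` is an H-continuous interval pair on `Om`. -/
def HContPair {n : ℕ} (Om : Set (Pt n)) (u v : Pt n → ℝ) : Prop :=
  IntervalPair Om u v ∧ HCont Om u v

/-- Lower endpoint of the pointwise interval product. -/
noncomputable def imin {n : ℕ} (u₁ v₁ u₂ v₂ : Pt n → ℝ) (x : Pt n) : ℝ :=
  min (min (u₁ x * u₂ x) (u₁ x * v₂ x)) (min (v₁ x * u₂ x) (v₁ x * v₂ x))

/-- Upper endpoint of the pointwise interval product. -/
noncomputable def imax {n : ℕ} (u₁ v₁ u₂ v₂ : Pt n → ℝ) (x : Pt n) : ℝ :=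
  max (max (u₁ x * u₂ x) (u₁ x * v₂ x)) (max (v₁ x * u₂ x) (v₁ x * v₂ x))

/-- `(pl, pu)` is the H-continuous pair contained pointwise in the interval sum of
`(u₁, v₁)` and `(u₂, v₂)`, i.e. `(pl, pu) = (u₁,v₁) ⊕ (u₂,v₂)`. -/
def IsOplus {n : ℕ} (Om : Set (Pt n)) (u₁ v₁ u₂ v₂ pl pu : Pt n → ℝ) : Prop :=
  HContPair Om pl pu ∧
    ∀ x ∈ Om, u₁ x + u₂ x ≤ pl x ∧ pl x ≤ pu x ∧ pu x ≤ v₁ x + v₂ x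

/-- `(ql, qu)` is the H-continuous pair contained pointwise in the interval product of
`(u₁, v₁)` and `(u₂, v₂)`, i.e. `(ql, qu) = (u₁,v₁) ⊗ (u₂,v₂)`. -/
def IsOtimes {n : ℕ} (Om : Set (Pt n)) (u₁ v₁ u₂ v₂ ql qu : Pt n → ℝ) : Prop :=
  HContPair Om ql qu ∧
    ∀ x ∈ Om, imin u₁ v₁ u₂ v₂ x ≤ ql x ∧ ql x ≤ qu x ∧ qu x ≤ imax u₁ v₁ u₂ v₂ x

lemma bdd_aux {n : ℕ} (Om : Set (Pt n)) (f : Pt n → ℝ) (x : Pt n) (hx : x ∈ Om) :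
    BddAbove {a : ℝ | ∃ δ : ℝ, 0 < δ ∧
      a = sInf (f '' {y | y ∈ Om ∧ ‖y - x‖ < δ ∧ y ∈ Om})} := by
  refine ⟨max (f x) 0, ?_⟩
  rintro a ⟨δ, hδ, rfl⟩
  by_cases hb : BddBelow (f '' {y | y ∈ Om ∧ ‖y - x‖ < δ ∧ y ∈ Om})
  · exact le_max_of_le_left (csInf_le hb ⟨x, ⟨hx, by simpa using hδ, hx⟩, rfl⟩)
  · rw [Real.sInf_of_not_bddBelow hb]
    exact le_max_right _ _

lemma bddBelow_aux {n : ℕ} (Om : Set (Pt n)) (f : Pt n → ℝ)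
    (hf : ∀ x ∈ Om, Ilow Om Om f x = f x) (x : Pt n) (δ : ℝ) (hδ : 0 < δ) :
    BddBelow (f '' {y | y ∈ Om ∧ ‖y - x‖ < δ ∧ y ∈ Om}) := by
  by_contra hb
  apply hb
  refine ⟨0, ?_⟩
  rintro _ ⟨z, ⟨hz, -, -⟩, rfl⟩
  rw [← hf z hz]
  refine le_csSup (bdd_aux Om f z hz) ⟨δ + ‖x - z‖, by positivity, ?_⟩
  rw [Real.sInf_of_not_bddBelow]
  intro hb2
  apply hb
  refine hb2.mono (image_mono ?_)
  rintro y ⟨hy, hyx, -⟩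
  refine ⟨hy, ?_, hy⟩
  have := norm_sub_le_norm_sub_add_norm_sub y x z
  linarith

lemma lsc_aux {n : ℕ} (Om : Set (Pt n)) (f : Pt n → ℝ)
    (hf : ∀ x ∈ Om, Ilow Om Om f x = f x) (x : Pt n) (hx : x ∈ Om) (a : ℝ) (ha : a < f x) :
    ∃ δ : ℝ, 0 < δ ∧ ∀ y ∈ Om, ‖y - x‖ < δ → a < f y := by
  rw [← hf x hx] at ha
  obtain ⟨_, ⟨δ, hδ, rfl⟩, hlt⟩ := exists_lt_of_lt_csSup (by exact ⟨_, 1, one_pos, rfl⟩) ha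
  exact ⟨δ, hδ, fun y hy hyx => hlt.trans_le
    (csInf_le (bddBelow_aux Om f hf x δ hδ) ⟨y, ⟨hy, hyx, hy⟩, rfl⟩)⟩

lemma le_Ilow_aux {n : ℕ} (Om : Set (Pt n)) (f : Pt n → ℝ) (x : Pt n) (hx : x ∈ Om) (a δ : ℝ)
    (hδ : 0 < δ) (h : ∀ y ∈ Om, ‖y - x‖ < δ → a ≤ f y) : a ≤ Ilow Om Om f x := by
  refine le_trans ?_ (le_csSup (bdd_aux Om f x hx) ⟨δ, hδ, rfl⟩)
  refine le_csInf ⟨_, x, ⟨hx, by simpa using hδ, hx⟩, rfl⟩ ?_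
  rintro _ ⟨y, ⟨hy, hyx, -⟩, rfl⟩
  exact h y hy hyx

lemma Ilow_neg_aux {n : ℕ} (Om : Set (Pt n)) (f : Pt n → ℝ) (x : Pt n) :
    Ilow Om Om (fun y => - f y) x = - Shigh Om Om f x := by
  have key : ∀ s : Set (Pt n), sInf ((fun y => - f y) '' s) = - sSup (f '' s) := by
    intro s
    rw [Real.sInf_def, ← image_neg_eq_neg, image_image]
    simp
  unfold Ilow Shigh
  rw [Real.sInf_def, neg_neg]
  congr 1
  ext a
  simp only [key, mem_ofPred_eq, Set.mem_neg]
  constructor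
  · rintro ⟨δ, hδ, rfl⟩
    exact ⟨δ, hδ, by simp⟩
  · rintro ⟨δ, hδ, h⟩
    exact ⟨δ, hδ, by linarith⟩

theorem stmt2 {n : ℕ} (Om : Set (Pt n)) (u v : Pt n → ℝ)
    (h : HContPair Om u v) :
    IsMeagre {x : ↥Om | u ↑x < v ↑x} ∧
    ContinuousOn u (Om \ {x | x ∈ Om ∧ u x < v x}) := by
  obtain ⟨⟨hbu, hbv, huv⟩, hH⟩ := h
  have hu := hH u u hbu hbu (fun x hx => ⟨le_rfl, le_rfl, huv x hx⟩)
  have hv := hH v v hbv hbv (fun x hx => ⟨huv x hx, le_rfl, le_rfl⟩)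
  have h1 := lsc_aux Om u (fun x hx => (hu x hx).1)
  have h2 := lsc_aux Om (fun y => - v y)
    (fun x hx => by rw [Ilow_neg_aux, (hv x hx).2])
  constructor
  · have hsub : {x : ↥Om | u ↑x < v ↑x} ⊆
        ⋃ r : ℚ × ℚ, {x : ↥Om | r.1 < r.2 ∧ u x ≤ r.1 ∧ (r.2 : ℝ) ≤ v x} := by
      intro x hx
      obtain ⟨b, hb1, hb2⟩ := exists_rat_btwn (show u x < v x from hx)
      obtain ⟨a, ha1, ha2⟩ := exists_rat_btwn hb1
      exact mem_iUnion.2 ⟨(a, b), by exact_mod_cast ha2, ha1.le, hb2.le⟩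
    refine IsMeagre.mono hsub ?_
    refine isMeagre_iUnion fun r => IsNowhereDense.isMeagre ?_
    obtain ⟨a, b⟩ := r
    have hcl : IsClosed {x : ↥Om | a < b ∧ u x ≤ a ∧ (b : ℝ) ≤ v x} := by
      rw [← isOpen_compl_iff, Metric.isOpen_iff]
      rintro ⟨x, hx⟩ hxc
      by_cases hab : a < b
      · by_cases hxa : u x ≤ a
        · have hxb : v x < b := by
            by_contra hcon
            exact hxc ⟨hab, hxa, not_lt.1 hcon⟩
          obtain ⟨δ, hδ, hy⟩ := h2 x hx (-b) (by simpa using hxb)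
          refine ⟨δ, hδ, ?_⟩
          rintro ⟨y, hyO⟩ hyd ⟨-, -, h3⟩
          have := hy y hyO (by simpa [Subtype.dist_eq, dist_eq_norm] using hyd)
          simp only at h3 this
          linarith
        · obtain ⟨δ, hδ, hy⟩ := h1 x hx a (not_le.1 hxa)
          refine ⟨δ, hδ, ?_⟩
          rintro ⟨y, hyO⟩ hyd ⟨-, h3, -⟩
          have := hy y hyO (by simpa [Subtype.dist_eq, dist_eq_norm] using hyd)
          simp only at h3 this
          linarith
      · exact ⟨1, one_pos, fun y _ h3 => hab h3.1⟩
    rw [hcl.isNowhereDense_iff, eq_empty_iff_forall_notMem]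
    rintro ⟨x, hx⟩ hxi
    rw [mem_interior_iff_mem_nhds, Metric.mem_nhds_iff] at hxi
    obtain ⟨δ, hδ, hball⟩ := hxi
    have hle := le_Ilow_aux Om (fun y => - u y) x hx (-a) δ hδ (by
      intro y hy hyx
      have := (@hball ⟨y, hy⟩ (by simpa [Subtype.dist_eq, dist_eq_norm] using hyx)).2.1
      simpa using this)
    rw [Ilow_neg_aux, (hu x hx).2] at hle
    obtain ⟨hab, -, h3⟩ := @hball ⟨x, hx⟩ (Metric.mem_ball_self hδ)
    have hab' : (a : ℝ) < b := by exact_mod_cast hab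
    simp only at h3
    linarith
  · rintro x ⟨hx, hxW⟩
    have hvx : v x ≤ u x := by
      by_contra hcon
      exact hxW ⟨hx, not_le.1 hcon⟩
    rw [Metric.continuousWithinAt_iff]
    intro ε hε
    obtain ⟨δ, hδ, hy⟩ := h1 x hx (u x - ε) (by linarith)
    obtain ⟨δ', hδ', hy'⟩ := h2 x hx (-(u x + ε)) (by linarith)
    refine ⟨min δ δ', lt_min hδ hδ', ?_⟩
    rintro y ⟨hyO, -⟩ hyd
    rw [dist_eq_norm, lt_min_iff] at hyd
    have e1 := hy y hyO hyd.1
    have e2 := hy' y hyO hyd.2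
    have e3 := huv y hyO
    rw [Real.dist_eq, abs_lt]
    constructor <;> linarith
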